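/- Let k ∈ (0,1) and define, for real u with 0 < u < K, J(u) = ∫₀^∞ sin(u√x)/(√x (cos(K√x) + cosh(K'√x))) dx + ∫₀^∞ sinh(u√x)/(√x (cosh(K√x) + cos(K'√x))) dx (this realizes ∫_ℝ sin(u√x)/√x · dx/(cos(K√x) + cosh(K'√x)) with √x = i√(−x) for x < 0). Then for every real u with 0 < u < K, J(u) · J(K − u) = 4. -/

import Mathlib

/-!
Write `A = K`, `B = K'` and `φ_{A,B}(t) = 1 / (cosh (A t) + cos (B t))`. The substitution `x = t²`
turns `J` into the restriction to the real axis of the function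
`g u = ∫₀^∞ 2 sinh (u t) φ_{A,B}(t) dt + ∫₀^∞ 2 sin (u t) φ_{B,A}(t) dt`, holomorphic for
`|Re u| < A`, `|Im u| < B`. For arbitrary `A, B > 0` this is a Jacobi elliptic function up to
scaling; only its scale depends on the relation between `A` and `B`.

Since `cosh (A t) + cos (B t) = 2 cosh ((A + i B) t / 2) cosh ((A - i B) t / 2)`, the sum of the
values of either integral at `u ± (A + i B) / 2` has a single hyperbolic cosine in the denominator.
Its expansion in partial fractions shows that the contributions of the two integrals cancel, so
`g` is antiperiodic under `A + i B`. The integrand decays like `2 e^{-A t}`, so `g (A - u)` has a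
simple pole `2 / u` at `0` and is otherwise regular. Hence `g u * g (A - u)` continues to a
holomorphic function with periods `A` and `i B`, which by the maximum principle is a constant,
namely `2 c` with `c = g' 0 > 0`. In the same way `(g'² - g⁴ / 4 - c²) / g²` is a constant `D`.

Solving `g'² = g⁴ / 4 + D g² + c²` on `[0, A / 2]` gives `K(l) = √(2c) / 2 * A` for
`l² = (c - D) / (2 c)`. Exchanging `A` and `B` replaces `D` by `-D` and gives
`K(l') = √(2c) / 2 * B`. As `A = K(k)`, `B = K(k')` and `K` is strictly increasing, `l = k` and
`c = 2`, so that the constant `2 c` is `4`.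
-/

open MeasureTheory Real

/-- The complete elliptic integral of the first kind `K(k)`. -/
noncomputable def ellipticK (k : ℝ) : ℝ :=
  ∫ θ in (0 : ℝ)..(π / 2), (1 - k ^ 2 * Real.sin θ ^ 2) ^ (-(1 / 2) : ℝ)

/-- Kuznetsov's moment integral `I_n^+`, realizing
`(1/2)∫_ℝ x^n dx/(cos(√x K) + cosh(√x K'))` with `√x = i√(−x)` for `x < 0`. -/
noncomputable def Iplus (k : ℝ) (n : ℕ) : ℝ :=
  (1 / 2) * (∫ x in Set.Ioi (0 : ℝ), x ^ n /
      (Real.cos (ellipticK k * Real.sqrt x) +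
        Real.cosh (ellipticK (Real.sqrt (1 - k ^ 2)) * Real.sqrt x)))
  + ((-1 : ℝ) ^ n / 2) * (∫ x in Set.Ioi (0 : ℝ), x ^ n /
      (Real.cosh (ellipticK k * Real.sqrt x) +
        Real.cos (ellipticK (Real.sqrt (1 - k ^ 2)) * Real.sqrt x)))

/-- Kuznetsov's moment integral `I_n^−`, realizing
`∫_ℝ x^{n+1} dx/(cos(√x K) − cosh(√x K'))` with `√x = i√(−x)` for `x < 0`. -/
noncomputable def Iminus (k : ℝ) (n : ℕ) : ℝ :=
  (∫ x in Set.Ioi (0 : ℝ), x ^ (n + 1) /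
      (Real.cos (ellipticK k * Real.sqrt x) -
        Real.cosh (ellipticK (Real.sqrt (1 - k ^ 2)) * Real.sqrt x)))
  + (-1 : ℝ) ^ (n + 1) * (∫ x in Set.Ioi (0 : ℝ), x ^ (n + 1) /
      (Real.cosh (ellipticK k * Real.sqrt x) -
        Real.cos (ellipticK (Real.sqrt (1 - k ^ 2)) * Real.sqrt x)))

/-- The generating-function integral `J(u)`, realizing
`∫_ℝ sin(u√x)/√x · dx/(cos(K√x) + cosh(K'√x))` with `√x = i√(−x)` for `x < 0`. -/
noncomputable def Jgen (k : ℝ) (u : ℝ) : ℝ :=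
  (∫ x in Set.Ioi (0 : ℝ), Real.sin (u * Real.sqrt x) /
      (Real.sqrt x * (Real.cos (ellipticK k * Real.sqrt x) +
        Real.cosh (ellipticK (Real.sqrt (1 - k ^ 2)) * Real.sqrt x))))
  + (∫ x in Set.Ioi (0 : ℝ), Real.sinh (u * Real.sqrt x) /
      (Real.sqrt x * (Real.cosh (ellipticK k * Real.sqrt x) +
        Real.cos (ellipticK (Real.sqrt (1 - k ^ 2)) * Real.sqrt x))))

open ProbabilityTheory ComplexConjugate

/-! ### The kernel and its moment generating function -/

lemma one_add_sq_div_two_le_cosh (x : ℝ) : 1 + x ^ 2 / 2 ≤ Real.cosh x := by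
  have hcosh : Real.cosh |x| = 1 + 2 * Real.sinh (|x| / 2) ^ 2 := by
    rw [show |x| = 2 * (|x| / 2) by ring, Real.cosh_two_mul, Real.cosh_sq]
    ring_nf
  have hsinh : |x| / 2 ≤ Real.sinh (|x| / 2) := Real.self_le_sinh_iff.2 (by positivity)
  rw [← Real.cosh_abs, hcosh, ← sq_abs]
  nlinarith [abs_nonneg x]

lemma sq_mul_cosh_add_one_le (A B t : ℝ) :
    A ^ 2 * (Real.cosh (A * t) + 1) ≤
      (A ^ 2 + B ^ 2) * (Real.cosh (A * t) + Real.cos (B * t)) := by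
  have hcosh := mul_le_mul_of_nonneg_left (one_add_sq_div_two_le_cosh (A * t)) (sq_nonneg B)
  have hcos := mul_le_mul_of_nonneg_left (Real.one_sub_sq_div_two_le_cos (x := B * t)) (sq_nonneg A)
  have hcos' := mul_nonneg (sq_nonneg B) (by linarith [Real.neg_one_le_cos (B * t)] :
    0 ≤ Real.cos (B * t) + 1)
  linarith

/-- The weight `1 / (cosh (A t) + cos (B t))` in both integrals of the theorem. -/
noncomputable def coshCosKernel (A B t : ℝ) : ℝ := 1 / (Real.cosh (A * t) + Real.cos (B * t))

section Kernel

variable {A : ℝ} (B t : ℝ)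

lemma cosh_add_cos_pos (hA : A ≠ 0) : 0 < Real.cosh (A * t) + Real.cos (B * t) := by
  have h : 0 < A ^ 2 * (Real.cosh (A * t) + 1) :=
    mul_pos (by positivity) (by linarith [Real.cosh_pos (A * t)])
  exact pos_of_mul_pos_right (h.trans_le (sq_mul_cosh_add_one_le A B t)) (by positivity)

lemma coshCosKernel_pos (hA : A ≠ 0) : 0 < coshCosKernel A B t :=
  one_div_pos.2 (cosh_add_cos_pos B t hA)

lemma coshCosKernel_mul_cosh_add_cos (hA : A ≠ 0) :
    coshCosKernel A B t * (Real.cosh (A * t) + Real.cos (B * t)) = 1 :=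
  one_div_mul_cancel (cosh_add_cos_pos B t hA).ne'

lemma coshCosKernel_le (hA : A ≠ 0) :
    coshCosKernel A B t ≤ 2 * (A ^ 2 + B ^ 2) / A ^ 2 * Real.exp (-(A * t)) := by
  have hexp : Real.exp (A * t) ≤ 2 * (Real.cosh (A * t) + 1) := by
    rw [Real.cosh_eq]
    linarith [Real.exp_pos (-(A * t))]
  have hA2 : 0 < A ^ 2 := by positivity
  rw [coshCosKernel, Real.exp_neg, ← div_eq_mul_inv, div_div,
    div_le_div_iff₀ (cosh_add_cos_pos B t hA) (by positivity)]
  linarith [sq_mul_cosh_add_one_le A B t, mul_le_mul_of_nonneg_left hexp hA2.le]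

lemma coshCosKernel_neg_right (A : ℝ) : coshCosKernel A (-B) t = coshCosKernel A B t := by
  simp only [coshCosKernel, neg_mul, Real.cos_neg]

@[fun_prop]
lemma measurable_coshCosKernel (A : ℝ) : Measurable (coshCosKernel A B) := by
  unfold coshCosKernel
  fun_prop

end Kernel

/-- The measure `coshCosKernel A B t dt` on `(0, ∞)`. -/
noncomputable def coshCosMeasure (A B : ℝ) : Measure ℝ :=
  (volume.restrict (Set.Ioi 0)).withDensity fun t ↦ ENNReal.ofReal (coshCosKernel A B t)

/-- The moment generating function `∫₀^∞ e^{u t} coshCosKernel A B t dt`, holomorphic for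
`Re u < A`. -/
noncomputable def coshCosMGF (A B : ℝ) (u : ℂ) : ℂ :=
  complexMGF id (coshCosMeasure A B) u

section MGF

variable {A B : ℝ} {u : ℂ}

lemma integral_coshCosMeasure {E : Type*} [NormedAddCommGroup E] [NormedSpace ℝ E] (hA : A ≠ 0)
    (g : ℝ → E) :
    ∫ t, g t ∂coshCosMeasure A B = ∫ t in Set.Ioi 0, coshCosKernel A B t • g t := by
  rw [coshCosMeasure, integral_withDensity_eq_integral_toReal_smul (by fun_prop) (by simp)]
  simp only [ENNReal.toReal_ofReal (coshCosKernel_pos B _ hA).le]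

lemma integrable_coshCosMeasure_iff {E : Type*} [NormedAddCommGroup E] [NormedSpace ℝ E]
    (hA : A ≠ 0) {g : ℝ → E} :
    Integrable g (coshCosMeasure A B) ↔
      IntegrableOn (fun t ↦ coshCosKernel A B t • g t) (Set.Ioi 0) := by
  rw [coshCosMeasure, integrable_withDensity_iff_integrable_smul' (by fun_prop) (by simp)]
  simp only [ENNReal.toReal_ofReal (coshCosKernel_pos B _ hA).le, IntegrableOn]

lemma Iio_subset_integrableExpSet (hA : A ≠ 0) :
    Set.Iio A ⊆ integrableExpSet id (coshCosMeasure A B) := by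
  intro x hx
  have hbound := ((exp_neg_integrableOn_Ioi 0 (sub_pos.2 hx)).const_mul
    (2 * (A ^ 2 + B ^ 2) / A ^ 2))
  refine (integrable_coshCosMeasure_iff hA).2 (hbound.mono' (by fun_prop) (.of_forall fun t ↦ ?_))
  rw [smul_eq_mul, Real.norm_of_nonneg
    (mul_nonneg (coshCosKernel_pos B t hA).le (Real.exp_pos _).le)]
  calc coshCosKernel A B t * Real.exp (x * t)
      ≤ 2 * (A ^ 2 + B ^ 2) / A ^ 2 * Real.exp (-(A * t)) * Real.exp (x * t) := by
        gcongr
        exact coshCosKernel_le B t hA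
    _ = 2 * (A ^ 2 + B ^ 2) / A ^ 2 * Real.exp (-(A - x) * t) := by
        rw [mul_assoc, ← Real.exp_add]
        ring_nf

lemma re_mem_interior_integrableExpSet (hA : A ≠ 0) (hu : u.re < A) :
    u.re ∈ interior (integrableExpSet id (coshCosMeasure A B)) :=
  interior_maximal (Iio_subset_integrableExpSet hA) isOpen_Iio hu

lemma hasDerivAt_coshCosMGF (hA : A ≠ 0) (hu : u.re < A) :
    HasDerivAt (coshCosMGF A B) (∫ t, t * Complex.exp (u * t) ∂coshCosMeasure A B) u :=
  hasDerivAt_complexMGF (re_mem_interior_integrableExpSet hA hu)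

lemma differentiableAt_coshCosMGF (hA : A ≠ 0) (hu : u.re < A) :
    DifferentiableAt ℂ (coshCosMGF A B) u :=
  (hasDerivAt_coshCosMGF hA hu).differentiableAt

lemma coshCosMGF_eq_integral (hA : A ≠ 0) (u : ℂ) :
    coshCosMGF A B u = ∫ t in Set.Ioi (0 : ℝ), coshCosKernel A B t * Complex.exp (u * t) := by
  simp only [coshCosMGF, complexMGF, integral_coshCosMeasure hA, Complex.real_smul, id_eq]

lemma integrableOn_coshCosKernel_mul_cexp (hA : A ≠ 0) (hu : u.re < A) :
    IntegrableOn (fun t : ℝ ↦ (coshCosKernel A B t : ℂ) * Complex.exp (u * t)) (Set.Ioi 0) := by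
  have h := integrable_cexp_mul_of_re_mem_integrableExpSet aemeasurable_id
    (Iio_subset_integrableExpSet hA hu : u.re ∈ integrableExpSet id (coshCosMeasure A B))
  simpa only [id_eq, Complex.real_smul] using (integrable_coshCosMeasure_iff hA).1 h

lemma coshCosMGF_neg_right (hA : A ≠ 0) (B : ℝ) (u : ℂ) :
    coshCosMGF A (-B) u = coshCosMGF A B u := by
  simp only [coshCosMGF_eq_integral hA, coshCosKernel_neg_right]

lemma conj_coshCosMGF (A B : ℝ) (u : ℂ) :
    conj (coshCosMGF A B u) = coshCosMGF A B (conj u) := by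
  simp only [coshCosMGF, complexMGF, ← integral_conj, ← Complex.exp_conj, map_mul,
    Complex.conj_ofReal]

lemma coshCosMGF_functional_equation (hA : 0 < A) (B : ℝ) (hu : u.re < 0) :
    coshCosMGF A B (u + A) + coshCosMGF A B (u - A) + coshCosMGF A B (u + B * Complex.I) +
      coshCosMGF A B (u - B * Complex.I) = -2 / u := by
  have hint : ∀ v : ℂ, v.re < A → _ := fun v ↦
    integrableOn_coshCosKernel_mul_cexp (A := A) (B := B) (u := v) hA.ne'
  have h₁ := hint (u + A) (by simpa using hu)
  have h₂ := hint (u - A) (by simp; linarith)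
  have h₃ := hint (u + B * Complex.I) (by simpa using hu.trans hA)
  have h₄ := hint (u - B * Complex.I) (by simpa using hu.trans hA)
  simp only [coshCosMGF_eq_integral hA.ne']
  rw [← integral_add h₁ h₂, ← integral_add (h₁.fun_add h₂) h₃,
    ← integral_add ((h₁.fun_add h₂).fun_add h₃) h₄]
  calc _ = ∫ t in Set.Ioi (0 : ℝ), 2 * Complex.exp (u * t) := by
        congr 1 with t
        have hker := congrArg (fun x : ℝ ↦ (x : ℂ)) (coshCosKernel_mul_cosh_add_cos B t hA.ne')
        push_cast [Complex.cosh, Complex.cos, neg_mul] at hker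
        simp only [add_mul, sub_eq_add_neg, neg_mul, Complex.exp_add,
          mul_right_comm (B : ℂ) Complex.I]
        linear_combination 2 * Complex.exp (u * t) * hker
    _ = -2 / u := by
        rw [integral_const_mul, integral_exp_mul_complex_Ioi hu]
        simp
        ring

end MGF

/-! ### Partial fractions of the hyperbolic secant -/

/-- The integral `∫₀^∞ 2 sinh (u t) coshCosKernel A B t dt`, convergent for `|Re u| < A`. -/
noncomputable def sinhTransform (A B : ℝ) (u : ℂ) : ℂ := coshCosMGF A B u - coshCosMGF A B (-u)

/-- The integral `∫₀^∞ 2 sinh (u t) / cosh (w t / 2) dt`, convergent for `|Re u| < Re w / 2`. -/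
noncomputable def sinhSech (w u : ℂ) : ℂ :=
  ∫ t in Set.Ioi (0 : ℝ), 2 * Complex.sinh (u * t) / Complex.cosh (w / 2 * t)

section SinhTransform

variable {A B : ℝ} {u w : ℂ}

lemma sinhTransform_neg (A B : ℝ) (u : ℂ) : sinhTransform A B (-u) = -sinhTransform A B u := by
  simp only [sinhTransform, neg_neg, neg_sub]

lemma sinhTransform_neg_right (hA : A ≠ 0) (B : ℝ) (u : ℂ) :
    sinhTransform A (-B) u = sinhTransform A B u := by
  simp only [sinhTransform, coshCosMGF_neg_right hA]

lemma conj_sinhTransform (A B : ℝ) (u : ℂ) :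
    conj (sinhTransform A B u) = sinhTransform A B (conj u) := by
  simp only [sinhTransform, map_sub, conj_coshCosMGF, map_neg]

lemma hasDerivAt_sinhTransform_zero (hA : 0 < A) (B : ℝ) :
    HasDerivAt (sinhTransform A B) ((2 * ∫ t, t ∂coshCosMeasure A B : ℝ) : ℂ) 0 := by
  have hMGF : HasDerivAt (coshCosMGF A B) ((∫ t, t ∂coshCosMeasure A B : ℝ) : ℂ) 0 :=
    (hasDerivAt_coshCosMGF hA.ne' hA).congr_deriv (by
      simpa only [zero_mul, Complex.exp_zero, mul_one] using integral_complex_ofReal)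
  have hneg := (by simpa only [neg_zero] using hMGF :
    HasDerivAt (coshCosMGF A B) _ (-0)).comp (0 : ℂ) (hasDerivAt_neg (0 : ℂ))
  exact (hMGF.sub hneg).congr_deriv (by push_cast; ring)

lemma differentiableAt_sinhTransform (hu : |u.re| < A) :
    DifferentiableAt ℂ (sinhTransform A B) u := by
  have hA : A ≠ 0 := ((abs_nonneg _).trans_lt hu).ne'
  obtain ⟨hneg, hpos⟩ := abs_lt.1 hu
  exact (differentiableAt_coshCosMGF hA hpos).sub
    ((differentiableAt_coshCosMGF hA (by rw [Complex.neg_re]; linarith)).comp u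
      differentiable_neg.differentiableAt)

lemma integrableOn_coshCosKernel_mul_sinh (hu : |u.re| < A) :
    IntegrableOn (fun t : ℝ ↦ (coshCosKernel A B t : ℂ) * (2 * Complex.sinh (u * t)))
      (Set.Ioi 0) := by
  have hA : A ≠ 0 := ((abs_nonneg _).trans_lt hu).ne'
  obtain ⟨hneg, hpos⟩ := abs_lt.1 hu
  refine ((integrableOn_coshCosKernel_mul_cexp (B := B) hA hpos).sub
    (integrableOn_coshCosKernel_mul_cexp (B := B) (u := -u) hA
      (by rw [Complex.neg_re]; linarith))).congr (.of_forall fun t ↦ ?_)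
  simp only [Pi.sub_apply, Complex.two_sinh, mul_sub, neg_mul]

lemma sinhTransform_eq_integral (hu : |u.re| < A) :
    sinhTransform A B u =
      ∫ t in Set.Ioi (0 : ℝ), (coshCosKernel A B t : ℂ) * (2 * Complex.sinh (u * t)) := by
  have hA : A ≠ 0 := ((abs_nonneg _).trans_lt hu).ne'
  obtain ⟨hneg, hpos⟩ := abs_lt.1 hu
  simp only [sinhTransform, coshCosMGF_eq_integral hA]
  rw [← integral_sub (integrableOn_coshCosKernel_mul_cexp hA hpos)
    (integrableOn_coshCosKernel_mul_cexp hA (by rw [Complex.neg_re]; linarith))]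
  simp only [Complex.two_sinh, mul_sub, neg_mul]

lemma two_mul_cosh_mul_cosh_conj (w : ℂ) (t : ℝ) :
    2 * (Complex.cosh (w / 2 * t) * Complex.cosh (conj w / 2 * t)) =
      (Real.cosh (w.re * t) + Real.cos (w.im * t) : ℝ) := by
  have hadd : (w.re : ℂ) * t = w / 2 * t + conj w / 2 * t := by
    rw [Complex.re_eq_add_conj]
    ring
  have hsub : (w.im : ℂ) * t * Complex.I = w / 2 * t - conj w / 2 * t := by
    rw [Complex.im_eq_sub_conj]
    field_simp
  push_cast
  rw [← Complex.cosh_mul_I, hadd, hsub, Complex.cosh_add, Complex.cosh_sub]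
  ring

lemma cosh_half_ne_zero (hw : w.re ≠ 0) (t : ℝ) : Complex.cosh (w / 2 * t) ≠ 0 := by
  intro h
  have := two_mul_cosh_mul_cosh_conj w t
  rw [h, zero_mul, mul_zero, eq_comm, Complex.ofReal_eq_zero] at this
  exact (cosh_add_cos_pos _ _ hw).ne' this

lemma two_sinh_div_cosh (hw : w.re ≠ 0) (u : ℂ) (t : ℝ) :
    2 * Complex.sinh (u * t) / Complex.cosh (w / 2 * t) =
      coshCosKernel w.re w.im t * (2 * Complex.sinh ((u + conj w / 2) * t)) +
        coshCosKernel w.re w.im t * (2 * Complex.sinh ((u - conj w / 2) * t)) := by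
  have hker := congrArg (fun x : ℝ ↦ (x : ℂ)) (coshCosKernel_mul_cosh_add_cos w.im t hw)
  simp only [Complex.ofReal_mul, Complex.ofReal_one, ← two_mul_cosh_mul_cosh_conj] at hker
  rw [div_eq_iff (cosh_half_ne_zero hw t), add_mul u, sub_mul, Complex.sinh_add,
    Complex.sinh_sub]
  linear_combination (-2 * Complex.sinh (u * t)) * hker

lemma abs_re_add_conj_div_two_lt (hu : |u.re| < w.re / 2) :
    |(u + conj w / 2).re| < w.re ∧ |(u - conj w / 2).re| < w.re := by
  obtain ⟨hneg, hpos⟩ := abs_lt.1 hu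
  have hre : (conj w / 2).re = w.re / 2 := by simp
  rw [Complex.add_re, Complex.sub_re, hre, abs_lt, abs_lt]
  exact ⟨⟨by linarith, by linarith⟩, by linarith, by linarith⟩

lemma integrableOn_sinhSech (hu : |u.re| < w.re / 2) :
    IntegrableOn (fun t : ℝ ↦ 2 * Complex.sinh (u * t) / Complex.cosh (w / 2 * t))
      (Set.Ioi 0) := by
  have hw : w.re ≠ 0 := by linarith [abs_nonneg u.re]
  obtain ⟨hadd, hsub⟩ := abs_re_add_conj_div_two_lt hu
  simp only [two_sinh_div_cosh hw]
  exact (integrableOn_coshCosKernel_mul_sinh hadd).add (integrableOn_coshCosKernel_mul_sinh hsub)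

lemma sinhTransform_add_sub (hu : |u.re| < w.re / 2) :
    sinhTransform w.re w.im (u + conj w / 2) + sinhTransform w.re w.im (u - conj w / 2) =
      sinhSech w u := by
  have hw : w.re ≠ 0 := by linarith [abs_nonneg u.re]
  obtain ⟨hadd, hsub⟩ := abs_re_add_conj_div_two_lt hu
  rw [sinhTransform_eq_integral hadd, sinhTransform_eq_integral hsub,
    ← integral_add (integrableOn_coshCosKernel_mul_sinh hadd)
      (integrableOn_coshCosKernel_mul_sinh hsub), sinhSech]
  simp only [two_sinh_div_cosh hw]

end SinhTransform

section PartialFractions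

variable {c u w : ℂ}

lemma two_sinh_mul_exp_neg (u c : ℂ) (t : ℝ) :
    2 * Complex.sinh (u * t) * Complex.exp (-c * t) =
      Complex.exp ((u - c) * t) - Complex.exp ((-u - c) * t) := by
  simp only [Complex.two_sinh, sub_eq_add_neg, add_mul, Complex.exp_add, neg_mul]

lemma integrableOn_sinh_mul_exp_neg (h : |u.re| < c.re) :
    IntegrableOn (fun t : ℝ ↦ 2 * Complex.sinh (u * t) * Complex.exp (-c * t)) (Set.Ioi 0) := by
  obtain ⟨hneg, hpos⟩ := abs_lt.1 h
  simp only [two_sinh_mul_exp_neg]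
  exact (integrableOn_exp_mul_complex_Ioi (by rw [Complex.sub_re]; linarith) 0).sub
    (integrableOn_exp_mul_complex_Ioi (by rw [Complex.sub_re, Complex.neg_re]; linarith) 0)

lemma integral_sinh_mul_exp_neg (h : |u.re| < c.re) :
    ∫ t in Set.Ioi (0 : ℝ), 2 * Complex.sinh (u * t) * Complex.exp (-c * t) =
      2 * u / (c ^ 2 - u ^ 2) := by
  obtain ⟨hneg, hpos⟩ := abs_lt.1 h
  have hsub : (u - c).re < 0 := by rw [Complex.sub_re]; linarith
  have hadd : (-u - c).re < 0 := by rw [Complex.sub_re, Complex.neg_re]; linarith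
  have hsub' : u - c ≠ 0 := fun h0 ↦ by simp [h0] at hsub
  have hadd' : -u - c ≠ 0 := fun h0 ↦ by simp [h0] at hadd
  have hprod : c ^ 2 - u ^ 2 ≠ 0 := by
    rw [show c ^ 2 - u ^ 2 = (u - c) * (-u - c) by ring]
    exact mul_ne_zero hsub' hadd'
  simp only [two_sinh_mul_exp_neg]
  rw [integral_sub (integrableOn_exp_mul_complex_Ioi hsub 0)
    (integrableOn_exp_mul_complex_Ioi hadd 0), integral_exp_mul_complex_Ioi hsub,
    integral_exp_mul_complex_Ioi hadd, Complex.ofReal_zero, mul_zero, mul_zero, Complex.exp_zero]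
  field_simp
  ring

lemma two_mul_sum_neg_one_pow_mul_exp {z : ℂ} (hz : Complex.cosh z ≠ 0) (N : ℕ) :
    2 * ∑ n ∈ Finset.range N, (-1) ^ n * Complex.exp (-(2 * n + 1) * z) =
      (1 - (-Complex.exp (-(2 * z))) ^ N) / Complex.cosh z := by
  induction N with
  | zero => simp
  | succ N ih =>
    have hexp : Complex.exp (-(2 * N + 1) * z) =
        Complex.exp (-(2 * z)) ^ N * Complex.exp (-z) := by
      rw [← Complex.exp_nat_mul, ← Complex.exp_add]
      ring_nf
    have hcosh : 2 * (Complex.exp (-z) * Complex.cosh z) = 1 + Complex.exp (-(2 * z)) := by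
      rw [mul_left_comm, Complex.two_cosh, mul_add, ← Complex.exp_add, ← Complex.exp_add]
      ring_nf
      simp
    rw [Finset.sum_range_succ, mul_add, ih, hexp, eq_div_iff hz, add_mul, div_mul_cancel₀ _ hz,
      neg_pow (Complex.exp _) (N + 1), neg_pow (Complex.exp _) N]
    linear_combination (-1) ^ N * Complex.exp (-(2 * z)) ^ N * hcosh

lemma sum_partialFractions_eq_integral (hu : |u.re| < w.re / 2) (N : ℕ) :
    ∑ n ∈ Finset.range N, (-1) ^ n * (4 * u / (((2 * n + 1) * (w / 2)) ^ 2 - u ^ 2)) =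
      ∫ t in Set.Ioi (0 : ℝ), 2 * Complex.sinh (u * t) / Complex.cosh (w / 2 * t) *
        (1 - (-Complex.exp (-(w * t))) ^ N) := by
  have hw : 0 < w.re := by linarith [abs_nonneg u.re]
  have hre (n : ℕ) : |u.re| < ((2 * n + 1) * (w / 2)).re := by
    have : ((2 * n + 1) * (w / 2)).re = n * w.re + w.re / 2 := by
      simp
      ring
    rw [this]
    nlinarith [n.cast_nonneg (α := ℝ)]
  have hterm (n : ℕ) : (-1) ^ n * (4 * u / (((2 * n + 1) * (w / 2)) ^ 2 - u ^ 2)) =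
      ∫ t in Set.Ioi (0 : ℝ), 2 * (-1) ^ n *
        (2 * Complex.sinh (u * t) * Complex.exp (-((2 * n + 1) * (w / 2)) * t)) := by
    rw [integral_const_mul, integral_sinh_mul_exp_neg (hre n)]
    ring
  simp only [hterm]
  rw [← integral_finsetSum _ fun n _ ↦ (integrableOn_sinh_mul_exp_neg (hre n)).const_mul _]
  congr 1 with t
  have hgeom := two_mul_sum_neg_one_pow_mul_exp (cosh_half_ne_zero hw.ne' t) N
  rw [show 2 * (w / 2 * (t : ℂ)) = w * t by ring] at hgeom
  rw [div_mul_eq_mul_div, mul_div_assoc, ← hgeom, ← mul_assoc, Finset.mul_sum]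
  refine Finset.sum_congr rfl fun n _ ↦ ?_
  rw [show -((2 * (n : ℂ) + 1) * (w / 2)) * (t : ℂ) = -(2 * n + 1) * (w / 2 * t) by ring]
  ring

lemma tendsto_sum_partialFractions (hu : |u.re| < w.re / 2) :
    Filter.Tendsto (fun N ↦ ∑ n ∈ Finset.range N,
      (-1) ^ n * (4 * u / (((2 * n + 1) * (w / 2)) ^ 2 - u ^ 2))) Filter.atTop
      (nhds (sinhSech w u)) := by
  have hw : 0 < w.re := by linarith [abs_nonneg u.re]
  have hlt : ∀ t : ℝ, 0 < t → ‖-Complex.exp (-(w * t))‖ < 1 := fun t ht ↦ by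
    rw [norm_neg, Complex.norm_exp, Real.exp_lt_one_iff]
    simpa using mul_pos hw ht
  simp only [sum_partialFractions_eq_integral hu]
  refine tendsto_integral_of_dominated_convergence
    (fun t ↦ ‖2 * Complex.sinh (u * t) / Complex.cosh (w / 2 * t)‖ * 2)
    (fun N ↦ ?_) ((integrableOn_sinhSech hu).norm.mul_const 2) (fun N ↦ ?_) ?_
  · exact (integrableOn_sinhSech hu).aestronglyMeasurable.mul (by fun_prop)
  · filter_upwards [ae_restrict_mem measurableSet_Ioi] with t ht
    rw [norm_mul]
    gcongr
    calc ‖1 - (-Complex.exp (-(w * t))) ^ N‖ ≤ ‖(1 : ℂ)‖ + ‖(-Complex.exp (-(w * t))) ^ N‖ :=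
          norm_sub_le _ _
      _ ≤ 1 + 1 := by
          rw [norm_one, norm_pow]
          gcongr
          exact pow_le_one₀ (norm_nonneg _) (hlt t ht).le
      _ = 2 := one_add_one_eq_two
  · filter_upwards [ae_restrict_mem measurableSet_Ioi] with t ht
    simpa using ((tendsto_pow_atTop_nhds_zero_of_norm_lt_one (hlt t ht)).const_sub 1).const_mul
      (2 * Complex.sinh (u * t) / Complex.cosh (w / 2 * t))

lemma sinhSech_I_mul_I_mul (hu : |u.re| < w.re / 2) (hIu : |(Complex.I * u).re| <
    (Complex.I * w).re / 2) : sinhSech (Complex.I * w) (Complex.I * u) =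
      -Complex.I * sinhSech w u := by
  refine tendsto_nhds_unique (tendsto_sum_partialFractions hIu)
    (((tendsto_sum_partialFractions hu).const_mul (-Complex.I)).congr fun N ↦ ?_)
  rw [Finset.mul_sum]
  refine Finset.sum_congr rfl fun n _ ↦ ?_
  have hden : ((2 * (n : ℂ) + 1) * (Complex.I * w / 2)) ^ 2 - (Complex.I * u) ^ 2 =
      -(((2 * n + 1) * (w / 2)) ^ 2 - u ^ 2) := by
    linear_combination (((2 * (n : ℂ) + 1) * (w / 2)) ^ 2 - u ^ 2) * Complex.I_sq
  rw [hden, div_neg]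
  ring

end PartialFractions

/-! ### The generating function on a rectangle and its continuation -/

/-- The open rectangle `|Re u| < A`, `|Im u| < B`. -/
def centeredRect (A B : ℝ) : Set ℂ := Set.Ioo (-A) A ×ℂ Set.Ioo (-B) B

section Rect

variable {A B : ℝ} {u : ℂ}

lemma mem_centeredRect : u ∈ centeredRect A B ↔ |u.re| < A ∧ |u.im| < B := by
  simp only [centeredRect, Complex.mem_reProdIm, Set.mem_Ioo, abs_lt]

lemma isOpen_centeredRect (A B : ℝ) : IsOpen (centeredRect A B) :=
  isOpen_Ioo.reProdIm isOpen_Ioo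

lemma neg_mem_centeredRect (hu : u ∈ centeredRect A B) : -u ∈ centeredRect A B := by
  simpa only [mem_centeredRect, Complex.neg_re, Complex.neg_im, abs_neg] using hu

lemma conj_mem_centeredRect (hu : u ∈ centeredRect A B) : conj u ∈ centeredRect A B := by
  simpa only [mem_centeredRect, Complex.conj_re, Complex.conj_im, abs_neg] using hu

lemma I_mul_mem_centeredRect (hu : u ∈ centeredRect A B) : Complex.I * u ∈ centeredRect B A := by
  simpa only [mem_centeredRect, Complex.I_mul_re, Complex.I_mul_im, abs_neg, and_comm] using hu

lemma add_real_mem_centeredRect (hu : u ∈ centeredRect A B) (hre : u.re < 0) :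
    u + A ∈ centeredRect A B := by
  obtain ⟨⟨hneg, -⟩, him⟩ := hu
  refine ⟨⟨?_, ?_⟩, ?_⟩
  · simp only [Complex.add_re, Complex.ofReal_re]
    linarith
  · simp only [Complex.add_re, Complex.ofReal_re]
    linarith
  · simpa using him

lemma add_I_mem_centeredRect (hu : u ∈ centeredRect A B) (him : u.im < 0) :
    u + B * Complex.I ∈ centeredRect A B := by
  obtain ⟨hre, hneg, -⟩ := hu
  refine ⟨by simpa using hre, ?_, ?_⟩
  · simp only [Complex.add_im, Complex.im_ofReal_mul, Complex.I_im]
    linarith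
  · simp only [Complex.add_im, Complex.im_ofReal_mul, Complex.I_im]
    linarith

lemma pos_and_pos_of_mem_centeredRect (hu : u ∈ centeredRect A B) : 0 < A ∧ 0 < B :=
  (mem_centeredRect.1 hu).imp (abs_nonneg _).trans_lt (abs_nonneg _).trans_lt

lemma convex_reProdIm {s t : Set ℝ} (hs : Convex ℝ s) (ht : Convex ℝ t) : Convex ℝ (s ×ℂ t) :=
  (hs.linear_preimage Complex.reLm).inter (ht.linear_preimage Complex.imLm)

lemma isPreconnected_centeredRect (A B : ℝ) : IsPreconnected (centeredRect A B) :=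
  (convex_reProdIm (convex_Ioo _ _) (convex_Ioo _ _)).isPreconnected

lemma zero_mem_centeredRect (hA : 0 < A) (hB : 0 < B) : (0 : ℂ) ∈ centeredRect A B := by
  simpa only [mem_centeredRect, Complex.zero_re, Complex.zero_im, abs_zero] using And.intro hA hB

end Rect

/-- The holomorphic extension of `Jgen k` to the rectangle `centeredRect A B`, for `A = K` and
`B = K'`. Since `-i sinh (i x) = sin x`, the second term is the integral over `t > 0` of
`2 sin (u t) coshCosKernel B A t`. -/
noncomputable def genJ (A B : ℝ) (u : ℂ) : ℂ :=
  sinhTransform A B u - Complex.I * sinhTransform B A (Complex.I * u)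

/-- The derivative of `genJ A B` at `0`. -/
noncomputable def genJSlope (A B : ℝ) : ℝ :=
  2 * (∫ t, t ∂coshCosMeasure A B) + 2 * ∫ t, t ∂coshCosMeasure B A

section GenJ

variable {A B : ℝ} {u v : ℂ}

lemma genJSlope_comm (A B : ℝ) : genJSlope A B = genJSlope B A := add_comm _ _

lemma genJ_neg (A B : ℝ) (u : ℂ) : genJ A B (-u) = -genJ A B u := by
  simp only [genJ, mul_neg, sinhTransform_neg]
  ring

lemma genJ_zero (A B : ℝ) : genJ A B 0 = 0 :=
  self_eq_neg.1 (by simpa only [neg_zero] using genJ_neg A B 0)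

lemma genJ_I_mul (A B : ℝ) (u : ℂ) : genJ A B (Complex.I * u) = Complex.I * genJ B A u := by
  simp only [genJ]
  rw [← mul_assoc, Complex.I_mul_I, neg_one_mul, sinhTransform_neg]
  linear_combination sinhTransform A B (Complex.I * u) * Complex.I_sq

lemma conj_genJ (A B : ℝ) (u : ℂ) : conj (genJ A B u) = genJ A B (conj u) := by
  simp only [genJ, map_sub, map_mul, conj_sinhTransform, Complex.conj_I, neg_mul, sinhTransform_neg,
    mul_neg, neg_neg]

lemma differentiableAt_genJ (hu : u ∈ centeredRect A B) : DifferentiableAt ℂ (genJ A B) u := by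
  obtain ⟨hre, him⟩ := mem_centeredRect.1 hu
  refine (differentiableAt_sinhTransform hre).sub (.const_mul (.comp u
    (differentiableAt_sinhTransform ?_) (differentiableAt_id.const_mul _)) _)
  simpa only [id_eq, Complex.I_mul_re, abs_neg] using him

lemma hasDerivAt_genJ_zero (hA : 0 < A) (hB : 0 < B) :
    HasDerivAt (genJ A B) (genJSlope A B : ℂ) 0 := by
  have hmul : HasDerivAt (fun u : ℂ ↦ Complex.I * u) Complex.I 0 := by
    simpa using (hasDerivAt_id (0 : ℂ)).const_mul Complex.I
  have hcomp := (by simpa only [mul_zero] using hasDerivAt_sinhTransform_zero hB A :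
    HasDerivAt (sinhTransform B A) _ (Complex.I * 0)).comp 0 hmul
  refine ((hasDerivAt_sinhTransform_zero hA B).sub (hcomp.const_mul Complex.I)).congr_deriv ?_
  rw [genJSlope]
  push_cast
  linear_combination (-2 * ((∫ t, t ∂coshCosMeasure B A : ℝ) : ℂ)) * Complex.I_sq

lemma genJ_add_sub_center (hre : |u.re| < A / 2) (him : |u.im| < B / 2) :
    genJ A B (u + (A + B * Complex.I) / 2) + genJ A B (u - (A + B * Complex.I) / 2) = 0 := by
  have hA : A ≠ 0 := by linarith [abs_nonneg u.re]
  set w : ℂ := A - B * Complex.I with hw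
  have hconj : conj w = A + B * Complex.I := by simp [hw]
  have hconjI : conj (Complex.I * w) = -Complex.I * (A + B * Complex.I) := by
    rw [map_mul, Complex.conj_I, hconj]
  have hfst := sinhTransform_add_sub (w := w) (u := u) (by simpa [hw] using hre)
  have hsnd := sinhTransform_add_sub (w := Complex.I * w) (u := Complex.I * u)
    (by simpa [hw] using him)
  rw [sinhSech_I_mul_I_mul (by simpa [hw] using hre) (by simpa [hw] using him), hconjI] at hsnd
  rw [hconj] at hfst
  have hwre : w.re = A := by simp [hw]
  have hwim : w.im = -B := by simp [hw]
  simp only [Complex.I_mul_re, Complex.I_mul_im, hwre, hwim, neg_neg,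
    sinhTransform_neg_right hA] at hfst hsnd
  have hplus : Complex.I * (u + (A + B * Complex.I) / 2) =
      Complex.I * u - -Complex.I * (A + B * Complex.I) / 2 := by ring
  have hminus : Complex.I * (u - (A + B * Complex.I) / 2) =
      Complex.I * u + -Complex.I * (A + B * Complex.I) / 2 := by ring
  simp only [genJ]
  rw [hplus, hminus]
  linear_combination hfst - Complex.I * hsnd + sinhSech w u * Complex.I_sq

lemma genJ_reflection_upper (hre : v.re ∈ Set.Ioo 0 A) (him : v.im ∈ Set.Ioo 0 B) :
    genJ A B (A + B * Complex.I - v) = genJ A B v := by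
  have h := genJ_add_sub_center (A := A) (B := B) (u := v - (A + B * Complex.I) / 2)
    (by rw [abs_lt]; constructor <;> simp <;> linarith [hre.1, hre.2])
    (by rw [abs_lt]; constructor <;> simp <;> linarith [him.1, him.2])
  rw [sub_add_cancel, sub_sub, add_halves, ← neg_sub, genJ_neg] at h
  linear_combination -h

end GenJ

section Rect

lemma eqOn_of_eqOn_inter {U V : Set ℂ} {f g : ℂ → ℂ} (hU : IsOpen U) (hU' : IsPreconnected U)
    (hV : IsOpen V) (hUV : (U ∩ V).Nonempty) (hf : DifferentiableOn ℂ f U)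
    (hg : DifferentiableOn ℂ g U) (h : Set.EqOn f g (U ∩ V)) : Set.EqOn f g U := by
  obtain ⟨z, hz⟩ := hUV
  exact (hf.analyticOnNhd hU).eqOn_of_preconnected_of_eventuallyEq (hg.analyticOnNhd hU) hU' hz.1
    (h.eventuallyEq_of_mem ((hU.inter hV).mem_nhds hz))

lemma exists_abs_le_half_of_add_eq {α : Type*} {f : ℝ → α} {a x : ℝ}
    (hf : ∀ y, |y| < a → y < 0 → f (y + a) = f y) (hx : |x| < a) :
    ∃ y, |y| ≤ a / 2 ∧ f y = f x := by
  obtain ⟨hneg, hpos⟩ := abs_lt.1 hx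
  rcases lt_or_ge (a / 2) x with h | h
  · refine ⟨x - a, abs_le.2 ⟨by linarith, by linarith⟩, ?_⟩
    simpa using (hf (x - a) (abs_lt.2 ⟨by linarith, by linarith⟩) (by linarith)).symm
  · rcases lt_or_ge x (-(a / 2)) with h' | h'
    · exact ⟨x + a, abs_le.2 ⟨by linarith, by linarith⟩, hf x hx (by linarith)⟩
    · exact ⟨x, abs_le.2 ⟨h', h⟩, rfl⟩

variable {A B : ℝ}

lemma exists_mem_closedRect_eq {α : Type*} {h : ℂ → α} {u : ℂ}
    (hper : ∀ u ∈ centeredRect A B, u.re < 0 → h (u + A) = h u)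
    (hperI : ∀ u ∈ centeredRect A B, u.im < 0 → h (u + B * Complex.I) = h u)
    (hu : u ∈ centeredRect A B) :
    ∃ v ∈ Set.Icc (-(A / 2)) (A / 2) ×ℂ Set.Icc (-(B / 2)) (B / 2), h v = h u := by
  obtain ⟨hre, him⟩ := mem_centeredRect.1 hu
  obtain ⟨x, hx, hxu⟩ := exists_abs_le_half_of_add_eq (f := fun x ↦ h ⟨x, u.im⟩)
    (fun x hx hneg ↦ by
    rw [← hper ⟨x, u.im⟩ (mem_centeredRect.2 ⟨hx, him⟩) hneg]
    congr 1
    apply Complex.ext <;> simp) hre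
  have hxA : |x| < A := hx.trans_lt (half_lt_self ((abs_nonneg _).trans_lt hre))
  obtain ⟨y, hy, hyu⟩ := exists_abs_le_half_of_add_eq (f := fun y ↦ h ⟨x, y⟩) (fun y hy hneg ↦ by
    rw [← hperI ⟨x, y⟩ (mem_centeredRect.2 ⟨hxA, hy⟩) hneg]
    congr 1
    apply Complex.ext <;> simp) him
  exact ⟨⟨x, y⟩, ⟨abs_le.1 hx, abs_le.1 hy⟩, hyu.trans hxu⟩

-- By periodicity all values are taken on the closed half-size rectangle, so `|h|` has a maximum.
lemma eqOn_const_of_periodic (hA : 0 < A) (hB : 0 < B) {h : ℂ → ℂ}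
    (hd : DifferentiableOn ℂ h (centeredRect A B))
    (hper : ∀ u ∈ centeredRect A B, u.re < 0 → h (u + A) = h u)
    (hperI : ∀ u ∈ centeredRect A B, u.im < 0 → h (u + B * Complex.I) = h u) :
    Set.EqOn h (fun _ ↦ h 0) (centeredRect A B) := by
  set Q := Set.Icc (-(A / 2)) (A / 2) ×ℂ Set.Icc (-(B / 2)) (B / 2) with hQ
  have hQsub : Q ⊆ centeredRect A B := fun z ⟨hre, him⟩ ↦ mem_centeredRect.2
    ⟨(abs_le.2 hre).trans_lt (half_lt_self hA), (abs_le.2 him).trans_lt (half_lt_self hB)⟩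
  have hQ0 : (0 : ℂ) ∈ Q := by
    simp only [hQ, Complex.mem_reProdIm, Complex.zero_re, Complex.zero_im, Set.mem_Icc,
      neg_nonpos, and_self, (half_pos hA).le, (half_pos hB).le]
  obtain ⟨z, hz, hmax⟩ := (isCompact_Icc.reProdIm isCompact_Icc : IsCompact Q).exists_isMaxOn
    ⟨0, hQ0⟩ (hd.mono hQsub).continuousOn.norm
  have hmax' : IsMaxOn (norm ∘ h) (centeredRect A B) z := fun u hu ↦ by
    obtain ⟨v, hv, hvu⟩ := exists_mem_closedRect_eq hper hperI hu
    simpa only [Set.mem_ofPred_eq, Function.comp, hvu] using hmax hv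
  have hconst := Complex.eqOn_of_isPreconnected_of_isMaxOn_norm (isPreconnected_centeredRect A B)
    (isOpen_centeredRect A B) hd (hQsub hz) hmax'
  exact fun u hu ↦ (hconst hu).trans (hconst (zero_mem_centeredRect hA hB)).symm

end Rect

/-- The regular part at its pole `u = 0` of the continuation of `genJ A B (A - u)` to the rectangle
`centeredRect A B`, obtained by substituting `coshCosMGF_functional_equation` for the only term of
`genJ A B (A - u)` that is singular there. -/
noncomputable def genJReg (A B : ℝ) (u : ℂ) : ℂ :=
  -(coshCosMGF A B (-u - A) + coshCosMGF A B (-u + B * Complex.I) +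
      coshCosMGF A B (-u - B * Complex.I)) -
    coshCosMGF A B (u - A) - Complex.I * sinhTransform B A (Complex.I * (A - u))

section GenJReg

variable {A B : ℝ} {u : ℂ}

lemma ne_zero_of_re_ne_zero (h : u.re ≠ 0) : u ≠ 0 := by
  rintro rfl
  exact h rfl

lemma ne_zero_of_im_ne_zero (h : u.im ≠ 0) : u ≠ 0 := by
  rintro rfl
  exact h rfl

lemma differentiableAt_genJReg (hu : u ∈ centeredRect A B) :
    DifferentiableAt ℂ (genJReg A B) u := by
  obtain ⟨hre, him⟩ := mem_centeredRect.1 hu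
  obtain ⟨hneg, hpos⟩ := abs_lt.1 hre
  have hA : A ≠ 0 := by linarith
  have hMGF {f : ℂ → ℂ} (hf : DifferentiableAt ℂ f u) (hfu : (f u).re < A) :
      DifferentiableAt ℂ (fun z ↦ coshCosMGF A B (f z)) u :=
    (differentiableAt_coshCosMGF hA hfu).comp u hf
  have h₁ := hMGF (f := fun z ↦ -z - A) (by fun_prop) (by simp; linarith)
  have h₂ := hMGF (f := fun z ↦ -z + B * Complex.I) (by fun_prop) (by simp; linarith)
  have h₃ := hMGF (f := fun z ↦ -z - B * Complex.I) (by fun_prop) (by simp; linarith)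
  have h₄ := hMGF (f := fun z ↦ z - A) (by fun_prop) (by simp; linarith)
  have h₅ : DifferentiableAt ℂ (fun z ↦ sinhTransform B A (Complex.I * (A - z))) u :=
    (differentiableAt_sinhTransform (by simpa using him)).comp u
      (by fun_prop : DifferentiableAt ℂ (fun z : ℂ ↦ Complex.I * (A - z)) u)
  exact (((h₁.add h₂).add h₃).neg.sub h₄).sub (h₅.const_mul _)

lemma conj_genJReg (A B : ℝ) (u : ℂ) : conj (genJReg A B u) = genJReg A B (conj u) := by
  simp only [genJReg, map_sub, map_neg, map_add, map_mul, conj_coshCosMGF, conj_sinhTransform,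
    Complex.conj_I, Complex.conj_ofReal, neg_mul, sinhTransform_neg]
  ring_nf

lemma genJ_real_sub (hA : 0 < A) (hu : 0 < u.re) :
    genJ A B (A - u) = 2 / u + genJReg A B u := by
  have hfun := coshCosMGF_functional_equation hA B (u := -u) (by simpa using hu)
  rw [neg_add_eq_sub, div_neg, neg_div, neg_neg] at hfun
  simp only [genJ, genJReg, sinhTransform, neg_sub]
  linear_combination hfun

-- For `Re u > 0` this is `genJ_reflection_upper`; the identity theorem removes the restriction.
lemma genJ_add_I (hu : u ∈ centeredRect A B) (him : u.im < 0) :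
    genJ A B (u + B * Complex.I) = 2 / u + genJReg A B u := by
  obtain ⟨hA, hB⟩ := pos_and_pos_of_mem_centeredRect hu
  set U : Set ℂ := Set.Ioo (-A) A ×ℂ Set.Ioo (-B) 0
  have hmem : ∀ z ∈ U, z ∈ centeredRect A B ∧ z + B * Complex.I ∈ centeredRect A B ∧ z ≠ 0 :=
    fun z ⟨⟨hz₁, hz₂⟩, hz₃, hz₄⟩ ↦ ⟨⟨⟨hz₁, hz₂⟩, hz₃, hz₄.trans hB⟩,
      mem_centeredRect.2 (by simpa [abs_lt] using ⟨⟨hz₁, hz₂⟩, by linarith, hz₄⟩),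
      ne_zero_of_im_ne_zero hz₄.ne⟩
  refine eqOn_of_eqOn_inter (U := U) (V := {z | 0 < z.re})
    (f := fun z ↦ genJ A B (z + B * Complex.I)) (g := fun z ↦ 2 / z + genJReg A B z)
    (isOpen_Ioo.reProdIm isOpen_Ioo)
    (convex_reProdIm (convex_Ioo _ _) (convex_Ioo _ _)).isPreconnected
    (isOpen_lt continuous_const Complex.continuous_re)
    ⟨⟨A / 2, -(B / 2)⟩, ?_, half_pos hA⟩ (fun z hz ↦ ?_) (fun z hz ↦ ?_) (fun z hz ↦ ?_)
    ⟨hu.1, hu.2.1, him⟩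
  · exact ⟨⟨by simp; linarith, by simp; linarith⟩, by simp; linarith, by simp; linarith⟩
  · exact ((differentiableAt_genJ (hmem z hz).2.1).comp z
      (by fun_prop : DifferentiableAt ℂ (fun z : ℂ ↦ z + B * Complex.I) z)).differentiableWithinAt
  · exact (((differentiableAt_const _).div differentiableAt_id (hmem z hz).2.2).add
      (differentiableAt_genJReg (hmem z hz).1)).differentiableWithinAt
  · obtain ⟨⟨⟨-, hz₂⟩, hz₃, hz₄⟩, hz₅ : 0 < z.re⟩ := hz
    change genJ A B (z + B * Complex.I) = 2 / z + genJReg A B z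
    rw [← genJ_real_sub hA hz₅, ← genJ_reflection_upper (by simpa using ⟨hz₅, hz₂⟩)
      (by simp; constructor <;> linarith)]
    ring_nf

lemma genJ_sub_I (hu : u ∈ centeredRect A B) (him : 0 < u.im) :
    genJ A B (u - B * Complex.I) = 2 / u + genJReg A B u := by
  have h := congrArg conj (genJ_add_I (conj_mem_centeredRect hu) (by simpa using him))
  simpa [conj_genJ, conj_genJReg, sub_eq_add_neg, map_ofNat] using h

lemma genJReg_neg (hu : u ∈ centeredRect A B) : genJReg A B (-u) = -genJReg A B u := by
  obtain ⟨hA, hB⟩ := pos_and_pos_of_mem_centeredRect hu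
  refine eqOn_of_eqOn_inter (f := fun z ↦ genJReg A B (-z)) (g := fun z ↦ -genJReg A B z)
    (V := {z | z.im < 0}) (isOpen_centeredRect A B)
    (isPreconnected_centeredRect A B) (isOpen_lt Complex.continuous_im continuous_const)
    ⟨⟨0, -(B / 2)⟩, mem_centeredRect.2 ⟨by simpa, ?_⟩, by simpa⟩ (fun z hz ↦ ?_) (fun z hz ↦ ?_)
    (fun z hz ↦ ?_) hu
  · rw [abs_neg, abs_of_pos (half_pos hB)]
    exact half_lt_self hB
  · exact ((differentiableAt_genJReg (neg_mem_centeredRect hz)).comp z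
      differentiable_neg.differentiableAt).differentiableWithinAt
  · exact (differentiableAt_genJReg hz).neg.differentiableWithinAt
  · obtain ⟨hz, him⟩ := hz
    have hlower := genJ_add_I hz him
    have hupper := genJ_sub_I (neg_mem_centeredRect hz) (by simpa using him)
    rw [← neg_add', genJ_neg, hlower, div_neg] at hupper
    linear_combination -hupper

lemma genJ_add_real (hu : u ∈ centeredRect A B) (hre : u.re < 0) :
    genJ A B (u + A) = -(2 / u + genJReg A B u) := by
  have hA : 0 < A := (abs_nonneg _).trans_lt (mem_centeredRect.1 hu).1
  have h := genJ_real_sub (B := B) hA (u := -u) (by simpa using hre)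
  rw [sub_neg_eq_add, add_comm, genJReg_neg hu, div_neg] at h
  rw [h]
  ring

end GenJReg

/-! ### Constancy of the product and the quartic differential equation -/

section Product

variable {A B : ℝ} {u : ℂ}

-- The product is elliptic with periods `A` and `iB`, and its pole at `0` cancels.
lemma genJ_mul_two_div_add_genJReg (hu : u ∈ centeredRect A B) (hu₀ : u ≠ 0) :
    genJ A B u * (2 / u + genJReg A B u) = 2 * genJSlope A B := by
  obtain ⟨hA, hB⟩ := pos_and_pos_of_mem_centeredRect hu
  have hzero := zero_mem_centeredRect hA hB
  have hdiff : DifferentiableOn ℂ (genJ A B) (centeredRect A B) :=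
    fun z hz ↦ (differentiableAt_genJ hz).differentiableWithinAt
  set h : ℂ → ℂ := fun z ↦ 2 * dslope (genJ A B) 0 z + genJ A B z * genJReg A B z with hh
  have hval {z : ℂ} (hz : z ≠ 0) : h z = genJ A B z * (2 / z + genJReg A B z) := by
    simp only [hh, dslope_of_ne _ hz, slope_def_field, genJ_zero, sub_zero]
    ring
  have hd : DifferentiableOn ℂ h (centeredRect A B) :=
    (((Complex.differentiableOn_dslope ((isOpen_centeredRect A B).mem_nhds hzero)).2
      hdiff).const_mul 2).add (hdiff.mul
        fun z hz ↦ (differentiableAt_genJReg hz).differentiableWithinAt)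
  have hconst : h u = h 0 := by
    refine eqOn_const_of_periodic hA hB hd (fun z hz hre ↦ ?_) (fun z hz him ↦ ?_) hu
    · have hre' : 0 < (z + A).re := by simpa [neg_lt_iff_pos_add] using hz.1.1
      rw [hval (ne_zero_of_re_ne_zero hre.ne), hval (ne_zero_of_re_ne_zero hre'.ne'),
        ← genJ_real_sub hA hre', sub_add_cancel_right, genJ_neg, genJ_add_real hz hre]
      ring
    · have him' : 0 < (z + B * Complex.I).im := by simpa [neg_lt_iff_pos_add] using hz.2.1
      rw [hval (ne_zero_of_im_ne_zero him.ne), hval (ne_zero_of_im_ne_zero him'.ne'),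
        genJ_add_I hz him, ← genJ_sub_I (add_I_mem_centeredRect hz him) him', add_sub_cancel_right]
      ring
  rw [← hval hu₀, hconst]
  simp [hh, genJ_zero, (hasDerivAt_genJ_zero hA hB).deriv]

lemma genJ_add_real_mul_genJ (hu : u ∈ centeredRect A B) (hre : u.re < 0) :
    genJ A B (u + A) * genJ A B u = -(2 * genJSlope A B) := by
  rw [genJ_add_real hu hre, ← genJ_mul_two_div_add_genJReg hu (ne_zero_of_re_ne_zero hre.ne)]
  ring

lemma genJ_add_I_mul_genJ (hu : u ∈ centeredRect A B) (him : u.im < 0) :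
    genJ A B (u + B * Complex.I) * genJ A B u = 2 * genJSlope A B := by
  rw [genJ_add_I hu him, ← genJ_mul_two_div_add_genJReg hu (ne_zero_of_im_ne_zero him.ne)]
  ring

end Product

section Quartic

lemma deriv_zero_eq_zero_of_even {f : ℂ → ℂ} (hf : ∀ z, f (-z) = f z) : deriv f 0 = 0 := by
  have h := deriv_comp_neg f 0
  simp only [hf, neg_zero] at h
  exact self_eq_neg.1 h

lemma deriv_neg_of_odd {f : ℂ → ℂ} (hf : ∀ z, f (-z) = -f z) (z : ℂ) :
    deriv f (-z) = deriv f z := by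
  have h := deriv_comp_neg f z
  simp only [hf, deriv.fun_neg] at h
  exact (neg_injective h).symm

-- Both `N` and `g ^ 2` vanish to second order at `0`, the latter exactly.
lemma exists_differentiableOn_mul_sq_eq {U : Set ℂ} {N g : ℂ → ℂ} (hU : U ∈ nhds (0 : ℂ))
    (hN : DifferentiableOn ℂ N U) (hN_even : ∀ z, N (-z) = N z) (hN₀ : N 0 = 0)
    (hg : DifferentiableOn ℂ g U) (hg₀ : g 0 = 0) (hg' : deriv g 0 ≠ 0)
    (hg_ne : ∀ z ∈ U, z ≠ 0 → g z ≠ 0) :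
    ∃ h : ℂ → ℂ, DifferentiableOn ℂ h U ∧ ∀ z ∈ U, h z * g z ^ 2 = N z := by
  have hg_dslope (z : ℂ) : z * dslope g 0 z = g z := by
    simpa [hg₀] using sub_smul_dslope g 0 z
  have hN_dslope (z : ℂ) : z ^ 2 * dslope (dslope N 0) 0 z = N z := by
    have h₁ := sub_smul_dslope N 0 z
    have h₂ := sub_smul_dslope (dslope N 0) 0 z
    simp only [sub_zero, smul_eq_mul, dslope_same, deriv_zero_eq_zero_of_even hN_even, hN₀]
      at h₁ h₂
    linear_combination h₁ + z * h₂
  have hne : ∀ z ∈ U, dslope g 0 z ≠ 0 := fun z hz h ↦ by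
    rcases eq_or_ne z 0 with rfl | hz₀
    · exact hg' (by rwa [dslope_same] at h)
    · exact hg_ne z hz hz₀ (by rw [← hg_dslope, h, mul_zero])
  have hdslope {f : ℂ → ℂ} (hf : DifferentiableOn ℂ f U) : DifferentiableOn ℂ (dslope f 0) U :=
    (Complex.differentiableOn_dslope hU).2 hf
  refine ⟨fun z ↦ dslope (dslope N 0) 0 z / dslope g 0 z ^ 2,
    (hdslope (hdslope hN)).div ((hdslope hg).pow 2) fun z hz ↦ pow_ne_zero 2 (hne z hz),
    fun z hz ↦ ?_⟩
  rw [← hg_dslope z, ← hN_dslope z]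
  field_simp [hne z hz]

-- The quotient `(g'² - g⁴ / 4 - c²) / g²` is unchanged when `g` is replaced by `±2c / g`.
lemma quartic_quotient_add_eq {g : ℂ → ℂ} {u s q c : ℂ} (hg : DifferentiableAt ℂ g u)
    (hq₀ : q ≠ 0) (hq : q ^ 2 = 4 * c ^ 2) (h : ∀ᶠ z in nhds u, g (z + s) * g z = q) :
    (deriv g (u + s) ^ 2 - g (u + s) ^ 4 / 4 - c ^ 2) / g (u + s) ^ 2 =
      (deriv g u ^ 2 - g u ^ 4 / 4 - c ^ 2) / g u ^ 2 := by
  have hne : ∀ᶠ z in nhds u, g z ≠ 0 := h.mono fun z hz ↦ right_ne_zero_of_mul (hz.trans_ne hq₀)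
  have hgu := hne.self_of_nhds
  have heq : (fun z ↦ g (z + s)) =ᶠ[nhds u] fun z ↦ q / g z :=
    (h.and hne).mono fun z hz ↦ eq_div_of_mul_eq hz.2 hz.1
  have hderiv : deriv g (u + s) = -(q * deriv g u) / g u ^ 2 := by
    rw [← deriv_comp_add_const, heq.deriv_eq, deriv_fun_div (differentiableAt_const _) hg hgu]
    simp
  have hvalue : g (u + s) = q / g u := heq.eq_of_nhds
  have hc : c ^ 2 = q ^ 2 / 4 := by rw [hq]; ring
  rw [hderiv, hvalue, hc]
  field_simp
  ring

variable {A B : ℝ} {g : ℂ → ℂ} {c : ℂ}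

lemma ne_zero_of_add_mul_eq (hc : c ≠ 0) (hodd : ∀ z, g (-z) = -g z)
    (hper : ∀ u ∈ centeredRect A B, u.re < 0 → g (u + A) * g u = -(2 * c))
    (hperI : ∀ u ∈ centeredRect A B, u.im < 0 → g (u + B * Complex.I) * g u = 2 * c)
    {u : ℂ} (hu : u ∈ centeredRect A B) (hu₀ : u ≠ 0) : g u ≠ 0 := by
  have hre : ∀ z ∈ centeredRect A B, z.re < 0 → g z ≠ 0 := fun z hz hneg ↦
    right_ne_zero_of_mul ((hper z hz hneg).trans_ne (by simpa using hc))
  have him : ∀ z ∈ centeredRect A B, z.im < 0 → g z ≠ 0 := fun z hz hneg ↦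
    right_ne_zero_of_mul ((hperI z hz hneg).trans_ne (by simpa using hc))
  have hneg : g (-u) ≠ 0 → g u ≠ 0 := by simp only [hodd, ne_eq, neg_eq_zero, imp_self]
  have hu_neg := neg_mem_centeredRect hu
  rcases lt_trichotomy u.re 0 with h | h | h
  · exact hre u hu h
  · rcases lt_trichotomy u.im 0 with h' | h' | h'
    · exact him u hu h'
    · exact absurd (Complex.ext h h') hu₀
    · exact hneg (him (-u) hu_neg (by simpa using h'))
  · exact hneg (hre (-u) hu_neg (by simpa using h))

lemma exists_deriv_sq_eq_quartic (hA : 0 < A) (hB : 0 < B)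
    (hg : DifferentiableOn ℂ g (centeredRect A B)) (hodd : ∀ z, g (-z) = -g z)
    (hderiv : deriv g 0 = c) (hc : c ≠ 0)
    (hper : ∀ u ∈ centeredRect A B, u.re < 0 → g (u + A) * g u = -(2 * c))
    (hperI : ∀ u ∈ centeredRect A B, u.im < 0 → g (u + B * Complex.I) * g u = 2 * c) :
    ∃ D : ℂ, ∀ u ∈ centeredRect A B, deriv g u ^ 2 = g u ^ 4 / 4 + D * g u ^ 2 + c ^ 2 := by
  have hopen := isOpen_centeredRect A B
  have hg₀ : g 0 = 0 := self_eq_neg.1 (by simpa using hodd 0)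
  obtain ⟨h, hh, hhg⟩ := exists_differentiableOn_mul_sq_eq
    (N := fun z ↦ deriv g z ^ 2 - g z ^ 4 / 4 - c ^ 2)
    (hopen.mem_nhds (zero_mem_centeredRect hA hB))
    ((((hg.deriv hopen).pow 2).sub ((hg.pow 4).div_const 4)).sub_const _)
    (fun z ↦ by simp only [deriv_neg_of_odd hodd, hodd, Even.neg_pow (by decide : Even 4)])
    (by simp [hg₀, hderiv]) hg hg₀ (hderiv ▸ hc) fun z ↦ ne_zero_of_add_mul_eq hc hodd hper hperI
  have hquot {z : ℂ} (hz : z ∈ centeredRect A B) (hgz : g z ≠ 0) :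
      h z = (deriv g z ^ 2 - g z ^ 4 / 4 - c ^ 2) / g z ^ 2 :=
    eq_div_of_mul_eq (pow_ne_zero 2 hgz) (hhg z hz)
  have hshift {z s q : ℂ} (hz : z ∈ centeredRect A B) (hzs : z + s ∈ centeredRect A B)
      (hq₀ : q ≠ 0) (hq : q ^ 2 = 4 * c ^ 2) (hgq : ∀ᶠ y in nhds z, g (y + s) * g y = q) :
      h (z + s) = h z := by
    have hprod := hgq.self_of_nhds.trans_ne hq₀
    rw [hquot hz (right_ne_zero_of_mul hprod), hquot hzs (left_ne_zero_of_mul hprod)]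
    exact quartic_quotient_add_eq (hg.differentiableAt (hopen.mem_nhds hz)) hq₀ hq hgq
  refine ⟨h 0, fun u hu ↦ ?_⟩
  have hconst : h u = h 0 := eqOn_const_of_periodic hA hB hh (fun z hz hre ↦ ?_)
    (fun z hz him ↦ ?_) hu
  · linear_combination g u ^ 2 * hconst - hhg u hu
  · refine hshift (q := -(2 * c)) hz (add_real_mem_centeredRect hz hre) (by simpa using hc)
      (by ring) ?_
    filter_upwards [hopen.mem_nhds hz,
      (isOpen_lt Complex.continuous_re continuous_const).mem_nhds hre] using hper
  · refine hshift (q := 2 * c) hz (add_I_mem_centeredRect hz him) (by simpa using hc) (by ring) ?_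
    filter_upwards [hopen.mem_nhds hz,
      (isOpen_lt Complex.continuous_im continuous_const).mem_nhds him] using hperI

end Quartic

section SlopePos

variable {A B : ℝ}

lemma integral_id_coshCosMeasure_pos (hA : 0 < A) (B : ℝ) : 0 < ∫ t, t ∂coshCosMeasure A B := by
  have hint : IntegrableOn (fun t ↦ coshCosKernel A B t • t) (Set.Ioi 0) := by
    refine (integrable_coshCosMeasure_iff hA.ne').1 ?_
    simpa only [id_eq, pow_one] using integrable_pow_of_mem_interior_integrableExpSet
      (re_mem_interior_integrableExpSet (B := B) (u := 0) hA.ne' hA) 1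
  have hpos : ∀ t ∈ Set.Ioi (0 : ℝ), 0 < coshCosKernel A B t • t := fun t ht ↦
    mul_pos (coshCosKernel_pos B t hA.ne') ht
  have hsupport : Set.Ioi 0 ⊆ Function.support fun t ↦ coshCosKernel A B t • t :=
    fun t ht ↦ (hpos t ht).ne'
  rw [integral_coshCosMeasure hA.ne', setIntegral_pos_iff_support_of_nonneg_ae
    (ae_restrict_of_forall_mem measurableSet_Ioi fun t ht ↦ (hpos t ht).le) hint,
    Set.inter_eq_right.2 hsupport, Real.volume_Ioi]
  exact ENNReal.zero_lt_top

lemma genJSlope_pos (hA : 0 < A) (hB : 0 < B) : 0 < genJSlope A B :=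
  add_pos (mul_pos two_pos (integral_id_coshCosMeasure_pos hA B))
    (mul_pos two_pos (integral_id_coshCosMeasure_pos hB A))

lemma exists_deriv_genJ_sq_eq (hA : 0 < A) (hB : 0 < B) :
    ∃ D : ℂ, ∀ u ∈ centeredRect A B, deriv (genJ A B) u ^ 2 =
      genJ A B u ^ 4 / 4 + D * genJ A B u ^ 2 + (genJSlope A B : ℂ) ^ 2 :=
  exists_deriv_sq_eq_quartic hA hB (fun _ hz ↦ (differentiableAt_genJ hz).differentiableWithinAt)
    (genJ_neg A B) (hasDerivAt_genJ_zero hA hB).deriv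
    (Complex.ofReal_ne_zero.2 (genJSlope_pos hA hB).ne')
    (fun _ ↦ genJ_add_real_mul_genJ) (fun _ ↦ genJ_add_I_mul_genJ)

lemma deriv_genJ_I_mul (A B : ℝ) (u : ℂ) :
    deriv (genJ A B) (Complex.I * u) = deriv (genJ B A) u := by
  have h := deriv_comp_mul_left Complex.I (genJ A B) u
  simp only [genJ_I_mul, deriv_const_mul_field, smul_eq_mul] at h
  exact (mul_left_cancel₀ Complex.I_ne_zero h).symm

end SlopePos

/-- The restriction of `genJ A B` to the real axis, where it is real valued. -/
noncomputable def realJ (A B x : ℝ) : ℝ := (genJ A B x).re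

section RealJ

variable {A B x : ℝ}

lemma genJ_ofReal (A B x : ℝ) : genJ A B x = (realJ A B x : ℂ) :=
  (Complex.conj_eq_iff_re.1 (by rw [conj_genJ, Complex.conj_ofReal])).symm

lemma realJ_neg (A B x : ℝ) : realJ A B (-x) = -realJ A B x := by
  simp only [realJ, Complex.ofReal_neg, genJ_neg, Complex.neg_re]

lemma ofReal_mem_centeredRect (hx : |x| < A) (hB : 0 < B) : (x : ℂ) ∈ centeredRect A B :=
  mem_centeredRect.2 ⟨by simpa using hx, by simpa using hB⟩

lemma hasDerivAt_realJ (hx : |x| < A) (hB : 0 < B) :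
    HasDerivAt (realJ A B) (deriv (genJ A B) x).re x :=
  (differentiableAt_genJ (ofReal_mem_centeredRect hx hB)).hasDerivAt.real_of_complex

lemma deriv_genJ_ofReal (hx : |x| < A) (hB : 0 < B) :
    deriv (genJ A B) x = ((deriv (realJ A B) x : ℝ) : ℂ) := by
  have hcomplex :=
    (differentiableAt_genJ (ofReal_mem_centeredRect hx hB)).hasDerivAt.comp_ofReal
  simp only [genJ_ofReal] at hcomplex
  exact hcomplex.unique (hasDerivAt_realJ hx hB).differentiableAt.hasDerivAt.ofReal_comp

lemma realJ_mul_realJ_sub (hB : 0 < B) (hx : x ∈ Set.Ioo 0 A) :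
    realJ A B x * realJ A B (A - x) = 2 * genJSlope A B := by
  have hxA : |x| < A := (abs_of_pos hx.1).trans_lt hx.2
  have h := genJ_mul_two_div_add_genJReg (ofReal_mem_centeredRect hxA hB)
    (Complex.ofReal_ne_zero.2 hx.1.ne')
  rw [← genJ_real_sub (hx.1.trans hx.2) (by simpa using hx.1), ← Complex.ofReal_sub,
    genJ_ofReal, genJ_ofReal] at h
  exact_mod_cast h

end RealJ

/-- A scaled Jacobi elliptic function on `(-A, A)`, with modulus `k` given by
`k ^ 2 = (c - D) / (2 * c)`: an odd solution `j` of `j'² = j⁴ / 4 + D j² + c²` with `j'(0) = c > 0`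
which satisfies the reflection formula `j(x) j(A - x) = 2c`. -/
structure IsEllipticSolution (A c D : ℝ) (j : ℝ → ℝ) : Prop where
  slope_pos : 0 < c
  neg (x : ℝ) : j (-x) = -j x
  differentiableAt {x : ℝ} (hx : |x| < A) : DifferentiableAt ℝ j x
  deriv_sq {x : ℝ} (hx : |x| < A) : deriv j x ^ 2 = j x ^ 4 / 4 + D * j x ^ 2 + c ^ 2
  deriv_zero : deriv j 0 = c
  mul_sub {x : ℝ} (hx : x ∈ Set.Ioo 0 A) : j x * j (A - x) = 2 * c

section RealODE

variable {A B : ℝ}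

lemma isEllipticSolution_realJ (hA : 0 < A) (hB : 0 < B) {D : ℂ}
    (hD : ∀ x : ℝ, |x| < A → deriv (genJ A B) x ^ 2 =
      genJ A B x ^ 4 / 4 + D * genJ A B x ^ 2 + (genJSlope A B : ℂ) ^ 2) :
    IsEllipticSolution A (genJSlope A B) D.re (realJ A B) where
  slope_pos := genJSlope_pos hA hB
  neg := realJ_neg A B
  differentiableAt hx := (hasDerivAt_realJ hx hB).differentiableAt
  deriv_sq {x} hx := by
    have h := hD x hx
    rw [deriv_genJ_ofReal hx hB, genJ_ofReal] at h
    have hre := congrArg Complex.re h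
    norm_cast at hre
    simpa only [Complex.add_re, Complex.ofReal_re, Complex.re_mul_ofReal] using hre
  deriv_zero := by
    rw [(hasDerivAt_realJ (by simpa) hB).deriv, Complex.ofReal_zero,
      (hasDerivAt_genJ_zero hA hB).deriv, Complex.ofReal_re]
  mul_sub := realJ_mul_realJ_sub hB

-- Passing to the imaginary axis exchanges `A` with `B` and replaces `D` by `-D`.
lemma exists_isEllipticSolution_realJ (hA : 0 < A) (hB : 0 < B) :
    ∃ D : ℝ, IsEllipticSolution A (genJSlope A B) D (realJ A B) ∧
      IsEllipticSolution B (genJSlope A B) (-D) (realJ B A) := by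
  obtain ⟨D, hD⟩ := exists_deriv_genJ_sq_eq hA hB
  refine ⟨D.re, isEllipticSolution_realJ hA hB fun x hx ↦ hD x (ofReal_mem_centeredRect hx hB), ?_⟩
  rw [genJSlope_comm, ← Complex.neg_re]
  refine isEllipticSolution_realJ hB hA fun x hx ↦ ?_
  have h := hD (Complex.I * x) (I_mul_mem_centeredRect (ofReal_mem_centeredRect hx hA))
  rw [deriv_genJ_I_mul, genJ_I_mul, mul_pow, mul_pow, Complex.I_sq, Complex.I_pow_four,
    genJSlope_comm] at h
  linear_combination h

end RealODE

/-! ### Elliptic integrals and the scale -/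

/-- The incomplete elliptic integral of the first kind `F(φ, k)`. -/
noncomputable def ellipticF (k φ : ℝ) : ℝ :=
  ∫ θ in (0 : ℝ)..φ, (1 - k ^ 2 * Real.sin θ ^ 2) ^ (-(1 / 2) : ℝ)

section Elliptic

variable {k : ℝ}

lemma one_sub_sq_mul_sin_sq_pos (hk : k ^ 2 < 1) (θ : ℝ) : 0 < 1 - k ^ 2 * Real.sin θ ^ 2 := by
  nlinarith [Real.sin_sq_le_one θ, sq_nonneg k]

lemma continuous_ellipticIntegrand (hk : k ^ 2 < 1) :
    Continuous fun θ : ℝ ↦ (1 - k ^ 2 * Real.sin θ ^ 2) ^ (-(1 / 2) : ℝ) :=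
  Continuous.rpow_const (by fun_prop) fun θ ↦ Or.inl (one_sub_sq_mul_sin_sq_pos hk θ).ne'

lemma hasDerivAt_ellipticF (hk : k ^ 2 < 1) (φ : ℝ) :
    HasDerivAt (ellipticF k) ((1 - k ^ 2 * Real.sin φ ^ 2) ^ (-(1 / 2) : ℝ)) φ :=
  ((continuous_ellipticIntegrand hk).integral_hasStrictDerivAt 0 φ).hasDerivAt

lemma ellipticK_pos (hk : k ^ 2 < 1) : 0 < ellipticK k :=
  intervalIntegral.intervalIntegral_pos_of_pos
    ((continuous_ellipticIntegrand hk).intervalIntegrable _ _)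
    (fun θ ↦ Real.rpow_pos_of_pos (one_sub_sq_mul_sin_sq_pos hk θ) _) pi_div_two_pos

lemma strictMonoOn_ellipticK : StrictMonoOn ellipticK (Set.Ico 0 1) := by
  rintro k ⟨hk, hk₁⟩ l ⟨hl, hl₁⟩ hkl
  have hsq : k ^ 2 < l ^ 2 := pow_lt_pow_left₀ hkl hk two_ne_zero
  have hk' : k ^ 2 < 1 := (sq_lt_one_iff₀ hk).2 hk₁
  have hl' : l ^ 2 < 1 := (sq_lt_one_iff₀ hl).2 hl₁
  refine intervalIntegral.integral_lt_integral_of_continuousOn_of_le_of_exists_lt pi_div_two_pos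
    (continuous_ellipticIntegrand hk').continuousOn
    (continuous_ellipticIntegrand hl').continuousOn (fun θ _ ↦ ?_)
    ⟨π / 2, ⟨pi_div_two_pos.le, le_rfl⟩, ?_⟩
  · refine Real.rpow_le_rpow_of_nonpos (one_sub_sq_mul_sin_sq_pos hl' θ) ?_ (by norm_num)
    gcongr
  · refine Real.rpow_lt_rpow_of_neg (one_sub_sq_mul_sin_sq_pos hl' _) ?_ (by norm_num)
    rw [Real.sin_pi_div_two]
    linarith

lemma sqrt_one_sub_sq_mem_Ioo (hk : k ∈ Set.Ioo (0 : ℝ) 1) : √(1 - k ^ 2) ∈ Set.Ioo (0 : ℝ) 1 :=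
  ⟨Real.sqrt_pos.2 (sub_pos.2 ((sq_lt_one_iff₀ hk.1.le).2 hk.2)),
    (Real.sqrt_lt' one_pos).2 (by linarith [pow_pos hk.1 2])⟩

lemma ellipticK_sqrt_one_sub_sq_lt {l : ℝ} (hk : k ∈ Set.Ioo (0 : ℝ) 1)
    (hl : l ∈ Set.Ioo (0 : ℝ) 1) (hkl : k < l) :
    ellipticK √(1 - l ^ 2) < ellipticK √(1 - k ^ 2) := by
  refine strictMonoOn_ellipticK (Set.Ioo_subset_Ico_self (sqrt_one_sub_sq_mem_Ioo hl))
    (Set.Ioo_subset_Ico_self (sqrt_one_sub_sq_mem_Ioo hk)) (Real.sqrt_lt_sqrt ?_ ?_)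
  · exact sub_nonneg.2 ((sq_lt_one_iff₀ hl.1.le).2 hl.2).le
  · exact sub_lt_sub_left (pow_lt_pow_left₀ hkl hk.1.le two_ne_zero) 1

-- As `k` increases, `K` increases and `K'` decreases.
lemma eq_one_of_ellipticK_eq_mul {l r : ℝ} (hk : k ∈ Set.Ioo (0 : ℝ) 1)
    (hl : l ∈ Set.Ioo (0 : ℝ) 1) (h : ellipticK l = r * ellipticK k)
    (h' : ellipticK √(1 - l ^ 2) = r * ellipticK √(1 - k ^ 2)) : r = 1 := by
  have hK : 0 < ellipticK k := ellipticK_pos ((sq_lt_one_iff₀ hk.1.le).2 hk.2)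
  have hK' : 0 < ellipticK √(1 - k ^ 2) :=
    have hk' := sqrt_one_sub_sq_mem_Ioo hk
    ellipticK_pos ((sq_lt_one_iff₀ hk'.1.le).2 hk'.2)
  have hmono := strictMonoOn_ellipticK.mono (Set.Ioo_subset_Ico_self (a := 0) (b := 1))
  rcases lt_trichotomy l k with hlt | rfl | hgt
  · have hK_lt := h ▸ hmono hl hk hlt
    have hK'_lt := h' ▸ ellipticK_sqrt_one_sub_sq_lt hl hk hlt
    nlinarith
  · exact (mul_eq_right₀ hK.ne').1 h.symm
  · have hK_lt := h ▸ hmono hk hl hgt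
    have hK'_lt := h' ▸ ellipticK_sqrt_one_sub_sq_lt hk hl hgt
    nlinarith

lemma sin_two_mul_arctan (x : ℝ) : Real.sin (2 * Real.arctan x) = 2 * x / (1 + x ^ 2) := by
  have h : √(1 + x ^ 2) ^ 2 = 1 + x ^ 2 := Real.sq_sqrt (by positivity)
  rw [Real.sin_two_mul, Real.sin_arctan, Real.cos_arctan]
  field_simp
  rw [h]

-- The modulus turns the quartic into `1 - k² sin² θ` at `θ = 2 arctan (y / √(2c))`.
lemma ellipticIntegrand_two_mul_arctan {c D v y : ℝ} (hc : 0 < c) (hv : 0 < v)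
    (hvy : v ^ 2 = y ^ 4 / 4 + D * y ^ 2 + c ^ 2) (hk : k ^ 2 = (c - D) / (2 * c)) :
    (1 - k ^ 2 * Real.sin (2 * Real.arctan (y / √(2 * c))) ^ 2) ^ (-(1 / 2) : ℝ) =
      (2 * c + y ^ 2) / (2 * v) := by
  have hs : √(2 * c) ^ 2 = 2 * c := Real.sq_sqrt (by positivity)
  have hsq : 1 - k ^ 2 * Real.sin (2 * Real.arctan (y / √(2 * c))) ^ 2 =
      (2 * v / (2 * c + y ^ 2)) ^ 2 := by
    have hsin : Real.sin (2 * Real.arctan (y / √(2 * c))) ^ 2 =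
        8 * c * y ^ 2 / (2 * c + y ^ 2) ^ 2 := by
      rw [sin_two_mul_arctan, div_pow, mul_pow, div_pow, hs]
      field_simp
      ring
    rw [hsin, hk, div_pow, mul_pow, hvy]
    field_simp
    ring
  rw [hsq, Real.rpow_neg (by positivity), ← Real.sqrt_eq_rpow, Real.sqrt_sq (by positivity),
    inv_div]

end Elliptic

namespace IsEllipticSolution

variable {A c D k x : ℝ} {j : ℝ → ℝ}

lemma map_zero (h : IsEllipticSolution A c D j) : j 0 = 0 :=
  self_eq_neg.1 (by simpa only [neg_zero] using h.neg 0)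

lemma half_sq (h : IsEllipticSolution A c D j) (hA : 0 < A) : j (A / 2) ^ 2 = 2 * c := by
  rw [← h.mul_sub ⟨half_pos hA, half_lt_self hA⟩, sub_half, sq]

lemma neg_slope_le (h : IsEllipticSolution A c D j) (hA : 0 < A) : -c ≤ D := by
  have hsq := h.deriv_sq (x := A / 2) ((abs_of_pos (half_pos hA)).trans_lt (half_lt_self hA))
  have hquartic : deriv j (A / 2) ^ 2 = 2 * c * (c + D) := by
    linear_combination hsq + (j (A / 2) ^ 2 / 4 + c / 2 + D) * h.half_sq hA
  have hnonneg : 0 ≤ c + D := by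
    refine nonneg_of_mul_nonneg_right ?_ (mul_pos two_pos h.slope_pos)
    exact hquartic ▸ sq_nonneg _
  linarith

-- If `D = -c`, then `y = j² / 2 - c` satisfies `|y'| = |j| |y|` and vanishes at `-A / 2`, hence at
-- `0` by Grönwall's inequality.
lemma neg_slope_ne (h : IsEllipticSolution A c D j) (hA : 0 < A) : -c ≠ D := by
  rintro rfl
  have hlt {x : ℝ} (hx : x ∈ Set.Icc (-(A / 2)) 0) : |x| < A :=
    abs_lt.2 ⟨by linarith [hx.1], by linarith [hx.2]⟩
  obtain ⟨M, hM⟩ := isCompact_Icc.exists_bound_of_continuousOn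
    fun x hx ↦ (h.differentiableAt (hlt hx)).continuousAt.continuousWithinAt
  have hderiv {x : ℝ} (hx : x ∈ Set.Icc (-(A / 2)) 0) :
      HasDerivAt (fun x ↦ j x ^ 2 / 2 - c) (j x * deriv j x) x := by
    have hj := (h.differentiableAt (hlt hx)).hasDerivAt
    refine (((hj.pow 2).div_const 2).sub_const c).congr_deriv ?_
    push_cast
    ring
  have hbound {x : ℝ} (hx : x ∈ Set.Icc (-(A / 2)) 0) :
      ‖j x * deriv j x‖ ≤ M * ‖j x ^ 2 / 2 - c‖ := by
    have habs : ‖deriv j x‖ = ‖j x ^ 2 / 2 - c‖ := by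
      rw [Real.norm_eq_abs, Real.norm_eq_abs, ← sq_eq_sq_iff_abs_eq_abs, h.deriv_sq (hlt hx)]
      ring
    rw [norm_mul, habs]
    exact mul_le_mul_of_nonneg_right (hM x hx) (norm_nonneg _)
  have hzero := eq_zero_of_abs_deriv_le_mul_abs_self_of_eq_zero_right
    (fun x hx ↦ (hderiv hx).continuousAt.continuousWithinAt)
    (fun x hx ↦ (hderiv (Set.Ico_subset_Icc_self hx)).hasDerivWithinAt)
    (by rw [h.neg, neg_sq, h.half_sq hA]; ring)
    (fun x hx ↦ hbound (Set.Ico_subset_Icc_self hx)) 0 ⟨by linarith, le_rfl⟩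
  rw [h.map_zero] at hzero
  linarith [h.slope_pos]

lemma neg_slope_lt (h : IsEllipticSolution A c D j) (hA : 0 < A) : -c < D :=
  (h.neg_slope_le hA).lt_of_ne (h.neg_slope_ne hA)

lemma deriv_ne_zero (h : IsEllipticSolution A c D j) (hA : 0 < A) (hx : |x| < A) :
    deriv j x ≠ 0 := by
  intro h₀
  have hsum : (j x ^ 2 / 2 - c) ^ 2 + (c + D) * j x ^ 2 = 0 := by
    linear_combination deriv j x * h₀ - h.deriv_sq hx
  have hcD : 0 < c + D := by linarith [h.neg_slope_lt hA]
  obtain ⟨hfst, hsnd⟩ := (add_eq_zero_iff_of_nonneg (by positivity) (by positivity)).1 hsum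
  have hj : j x ^ 2 = 0 := (mul_eq_zero.1 hsnd).resolve_left hcD.ne'
  rw [hj] at hfst
  nlinarith [h.slope_pos]

lemma deriv_pos (h : IsEllipticSolution A c D j) (hx : |x| < A) : 0 < deriv j x := by
  have hA : 0 < A := (abs_nonneg x).trans_lt hx
  rcases hasDerivWithinAt_forall_lt_or_forall_gt_of_forall_ne (convex_Ioo (-A) A)
    (fun y hy ↦ (h.differentiableAt (abs_lt.2 hy)).hasDerivAt.hasDerivWithinAt)
    (fun y hy ↦ h.deriv_ne_zero hA (abs_lt.2 hy)) with hneg | hpos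
  · have h₀ := hneg 0 ⟨neg_lt_zero.2 hA, hA⟩
    rw [h.deriv_zero] at h₀
    exact absurd h₀ h.slope_pos.not_gt
  · exact hpos x (abs_lt.1 hx)

lemma half (h : IsEllipticSolution A c D j) (hA : 0 < A) : j (A / 2) = √(2 * c) := by
  have hmono : StrictMonoOn j (Set.Ioo (-A) A) :=
    strictMonoOn_of_deriv_pos (convex_Ioo _ _)
      (fun y hy ↦ (h.differentiableAt (abs_lt.2 hy)).continuousAt.continuousWithinAt)
      fun y hy ↦ h.deriv_pos (abs_lt.2 (Set.mem_Ioo.1 (interior_subset hy)))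
  have hpos : j 0 < j (A / 2) :=
    hmono ⟨by linarith, hA⟩ ⟨by linarith, half_lt_self hA⟩ (half_pos hA)
  rw [h.map_zero] at hpos
  rw [← h.half_sq hA, Real.sqrt_sq hpos.le]

lemma hasDerivAt_ellipticF_two_mul_arctan (h : IsEllipticSolution A c D j) (hx : |x| < A)
    (hk : k ^ 2 = (c - D) / (2 * c)) (hk₁ : k ^ 2 < 1) :
    HasDerivAt (fun x ↦ ellipticF k (2 * Real.arctan (j x / √(2 * c)))) √(2 * c) x := by
  have hc := h.slope_pos
  have hv := h.deriv_pos hx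
  have hs_sq : √(2 * c) ^ 2 = 2 * c := Real.sq_sqrt (by positivity)
  refine ((hasDerivAt_ellipticF hk₁ _).comp x
    (((h.differentiableAt hx).hasDerivAt.div_const _).arctan.const_mul 2)).congr_deriv ?_
  rw [ellipticIntegrand_two_mul_arctan hc hv (h.deriv_sq hx) hk, div_pow, hs_sq]
  field_simp
  rw [hs_sq]

lemma ellipticK_eq (h : IsEllipticSolution A c D j) (hA : 0 < A)
    (hk : k ^ 2 = (c - D) / (2 * c)) : ellipticK k = √(2 * c) / 2 * A := by
  have hc := h.slope_pos
  have hs : √(2 * c) ≠ 0 := (Real.sqrt_pos.2 (by positivity)).ne'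
  have hk₁ : k ^ 2 < 1 := by
    rw [hk, div_lt_one (by positivity)]
    linarith [h.neg_slope_lt hA]
  have hderiv : ∀ x ∈ Set.uIcc 0 (A / 2), HasDerivAt
      (fun x ↦ ellipticF k (2 * Real.arctan (j x / √(2 * c)))) √(2 * c) x := by
    intro x hx
    rw [Set.uIcc_of_le (half_pos hA).le] at hx
    refine h.hasDerivAt_ellipticF_two_mul_arctan ?_ hk hk₁
    exact (abs_of_nonneg hx.1).trans_lt (hx.2.trans_lt (half_lt_self hA))
  have hint := intervalIntegral.integral_eq_sub_of_hasDerivAt hderiv intervalIntegrable_const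
  have hend : ellipticF k (2 * Real.arctan (j (A / 2) / √(2 * c))) = ellipticK k := by
    rw [h.half hA, div_self hs, Real.arctan_one, show 2 * (π / 4) = π / 2 by ring]
    rfl
  have hstart : ellipticF k (2 * Real.arctan (j 0 / √(2 * c))) = 0 := by
    rw [h.map_zero, zero_div, Real.arctan_zero, mul_zero, ellipticF, intervalIntegral.integral_same]
  rw [hend, hstart, intervalIntegral.integral_const, smul_eq_mul] at hint
  linear_combination -hint

end IsEllipticSolution

section Conclusion

lemma genJSlope_ellipticK {k : ℝ} (hk : k ∈ Set.Ioo (0 : ℝ) 1) :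
    genJSlope (ellipticK k) (ellipticK √(1 - k ^ 2)) = 2 := by
  have hk' := sqrt_one_sub_sq_mem_Ioo hk
  have hK : 0 < ellipticK k := ellipticK_pos ((sq_lt_one_iff₀ hk.1.le).2 hk.2)
  have hK' : 0 < ellipticK √(1 - k ^ 2) := ellipticK_pos ((sq_lt_one_iff₀ hk'.1.le).2 hk'.2)
  obtain ⟨D, hJ, hJ'⟩ := exists_isEllipticSolution_realJ hK hK'
  set c := genJSlope (ellipticK k) (ellipticK √(1 - k ^ 2))
  have hc : 0 < c := hJ.slope_pos
  have hD : -c < D := hJ.neg_slope_lt hK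
  have hD' : D < c := neg_lt_neg_iff.1 (hJ'.neg_slope_lt hK')
  set l := √((c - D) / (2 * c))
  have hl_sq : l ^ 2 = (c - D) / (2 * c) :=
    Real.sq_sqrt (div_nonneg (by linarith) (by linarith))
  have hl : l ∈ Set.Ioo (0 : ℝ) 1 := by
    refine ⟨Real.sqrt_pos.2 (div_pos (by linarith) (by linarith)), (Real.sqrt_lt' one_pos).2 ?_⟩
    rw [one_pow, div_lt_one (by linarith)]
    linarith
  have hl'_sq : √(1 - l ^ 2) ^ 2 = (c - -D) / (2 * c) := by
    rw [Real.sq_sqrt (sub_nonneg.2 ((sq_lt_one_iff₀ hl.1.le).2 hl.2).le), hl_sq]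
    field_simp
    ring
  have hscale : √(2 * c) / 2 = 1 :=
    eq_one_of_ellipticK_eq_mul hk hl (hJ.ellipticK_eq hK hl_sq) (hJ'.ellipticK_eq hK' hl'_sq)
  have hsqrt : √(2 * c) = 2 := by linarith
  have hsq : √(2 * c) ^ 2 = 2 * c := Real.sq_sqrt (by linarith)
  rw [hsqrt] at hsq
  linarith

-- The substitution `x = t ^ 2`.
lemma integral_sqrt_div_sqrt (f q : ℝ → ℝ) :
    ∫ x in Set.Ioi (0 : ℝ), f √x / (√x * q √x) =
      ∫ t in Set.Ioi (0 : ℝ), 1 / q t * (2 * f t) := by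
  rw [← integral_comp_rpow_Ioi_of_pos (p := 2) two_pos]
  refine setIntegral_congr_fun measurableSet_Ioi fun t (ht : 0 < t) ↦ ?_
  have hsqrt : √(t ^ (2 : ℝ)) = t := by rw [Real.rpow_two, Real.sqrt_sq ht.le]
  have hjac : t ^ ((2 : ℝ) - 1) = t := by norm_num
  simp only [hsqrt, hjac, smul_eq_mul]
  field_simp

variable {A B u : ℝ}

lemma sinhTransform_ofReal (hu : |u| < A) :
    sinhTransform A B u =
      ((∫ t in Set.Ioi (0 : ℝ), coshCosKernel A B t * (2 * Real.sinh (u * t)) : ℝ) : ℂ) := by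
  rw [sinhTransform_eq_integral (by simpa using hu), ← integral_complex_ofReal]
  push_cast
  rfl

lemma sinhTransform_I_mul_ofReal (hA : 0 < A) :
    sinhTransform A B (Complex.I * u) = Complex.I *
      ((∫ t in Set.Ioi (0 : ℝ), coshCosKernel A B t * (2 * Real.sin (u * t)) : ℝ) : ℂ) := by
  rw [sinhTransform_eq_integral (by simpa using hA), ← integral_complex_ofReal,
    ← integral_const_mul]
  congr 1 with t
  rw [mul_assoc, mul_comm Complex.I, Complex.sinh_mul_I]
  push_cast
  ring

lemma realJ_eq_integral (hu : |u| < A) (hB : 0 < B) :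
    realJ A B u = (∫ t in Set.Ioi (0 : ℝ), coshCosKernel B A t * (2 * Real.sin (u * t))) +
      ∫ t in Set.Ioi (0 : ℝ), coshCosKernel A B t * (2 * Real.sinh (u * t)) := by
  rw [realJ, genJ, sinhTransform_ofReal hu, sinhTransform_I_mul_ofReal hB, ← mul_assoc,
    Complex.I_mul_I, neg_one_mul, sub_neg_eq_add, add_comm, ← Complex.ofReal_add, Complex.ofReal_re]

lemma Jgen_eq_realJ {k : ℝ} (hu : |u| < ellipticK k) (hK' : 0 < ellipticK √(1 - k ^ 2)) :
    Jgen k u = realJ (ellipticK k) (ellipticK √(1 - k ^ 2)) u := by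
  rw [realJ_eq_integral hu hK', Jgen,
    integral_sqrt_div_sqrt (fun t ↦ Real.sin (u * t)) fun t ↦ Real.cos (ellipticK k * t) +
      Real.cosh (ellipticK √(1 - k ^ 2) * t),
    integral_sqrt_div_sqrt (fun t ↦ Real.sinh (u * t)) fun t ↦ Real.cosh (ellipticK k * t) +
      Real.cos (ellipticK √(1 - k ^ 2) * t)]
  simp only [coshCosKernel, add_comm (Real.cos _)]

end Conclusion

theorem Jgen_mul_Jgen_reflection (k : ℝ) (hk : k ∈ Set.Ioo (0 : ℝ) 1) :
    ∀ u : ℝ, 0 < u → u < ellipticK k → Jgen k u * Jgen k (ellipticK k - u) = 4 := by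
  intro u hu₀ hu
  have hk' := sqrt_one_sub_sq_mem_Ioo hk
  have hK' : 0 < ellipticK √(1 - k ^ 2) := ellipticK_pos ((sq_lt_one_iff₀ hk'.1.le).2 hk'.2)
  rw [Jgen_eq_realJ (abs_lt.2 ⟨by linarith, hu⟩) hK',
    Jgen_eq_realJ (abs_lt.2 ⟨by linarith, by linarith⟩) hK', realJ_mul_realJ_sub hK' ⟨hu₀, hu⟩,
    genJSlope_ellipticK hk]
  norm_num
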